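/- Fix a pmf p on 𝒳ⁿ with p(xⁿ) > 0 for all xⁿ, λ ≥ 0, a distortion function d: 𝒳ⁿ×𝒳̂ⁿ→[0,∞), and consider the Blahut–Arimoto-type iteration: starting from a strictly positive causal conditioning pmf q⁰, for k ≥ 1 set r^k(x̂ⁿ|xⁿ) = q^{k−1}(x̂ⁿ||x^{n−1})2^{−λd(xⁿ,x̂ⁿ)} / Σ_{x̂ⁿ} q^{k−1}(x̂ⁿ||x^{n−1})2^{−λd(xⁿ,x̂ⁿ)} and let q^k be the causal conditioning pmf induced by the joint p·r^k. Then with K(r,q) = I_FF(r,q) + λ·Σ_{xⁿ,x̂ⁿ} p(xⁿ)r(x̂ⁿ|xⁿ)d(xⁿ,x̂ⁿ), one has K(r^k,q^k) ≥ K(r^{k+1},q^{k+1}) for all k ≥ 1, and the inequality is strict unless r^k = r^{k+1} and q^k = q^{k+1}. -/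

import Mathlib

open scoped BigOperators
open Filter

noncomputable section

namespace FFRD

variable {X Y : Type} [Fintype X] [DecidableEq X] [Fintype Y] [DecidableEq Y] {n : ℕ}

/-- `p` is a probability mass function on a finite type. -/
def IsPMF {α : Type} [Fintype α] (p : α → ℝ) : Prop :=
  (∀ a, 0 ≤ p a) ∧ ∑ a, p a = 1

/-- `r` is a conditional pmf on `Fin n → Y` given `Fin n → X`. -/
def IsCondPMF (r : (Fin n → X) → (Fin n → Y) → ℝ) : Prop :=
  (∀ x y, 0 ≤ r x y) ∧ ∀ x, ∑ y, r x y = 1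

/-- The causal conditioning pmf `q_r(ŷⁿ‖x^{n-1})` induced by the joint pmf `p(x)·r(y|x)`:
the product over `i` of the conditional probabilities `P(y_i | y^{i-1}, x^{i-1})`. -/
def causalCond (p : (Fin n → X) → ℝ) (r : (Fin n → X) → (Fin n → Y) → ℝ)
    (x : Fin n → X) (y : Fin n → Y) : ℝ :=
  ∏ i : Fin n,
    ((∑ x' : Fin n → X, ∑ y' : Fin n → Y,
        if (∀ j, j < i → x' j = x j) ∧ (∀ j, j ≤ i → y' j = y j)
        then p x' * r x' y' else 0) /
      (∑ x' : Fin n → X, ∑ y' : Fin n → Y,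
        if (∀ j, j < i → x' j = x j) ∧ (∀ j, j < i → y' j = y j)
        then p x' * r x' y' else 0))

/-- Directed information `I(X̂ⁿ → Xⁿ)` computed from source pmf `p` and conditional pmf `r`. -/
def directedInfo (p : (Fin n → X) → ℝ) (r : (Fin n → X) → (Fin n → Y) → ℝ) : ℝ :=
  ∑ x, ∑ y, p x * r x y * Real.logb 2 (r x y / causalCond p r x y)

/-- The `n`-th order rate distortion function with feed-forward. -/
def Rn (n : ℕ) (p : (Fin n → X) → ℝ) (d : (Fin n → X) → (Fin n → Y) → ℝ) (D : ℝ) : ℝ :=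
  (1 / (n : ℝ)) *
    sInf {v | ∃ r : (Fin n → X) → (Fin n → Y) → ℝ, IsCondPMF r ∧
      (∑ x, ∑ y, p x * r x y * d x y) ≤ D ∧ v = directedInfo p r}

/-- Left shift on sequences. -/
def shift (X : Type) : (ℕ → X) → (ℕ → X) := fun ω k => ω (k + 1)

/-- The law of the first `n` coordinates under `μ`. -/
def lawFin [MeasurableSpace X] (μ : MeasureTheory.Measure (ℕ → X)) (n : ℕ)
    (x : Fin n → X) : ℝ :=
  (μ {ω | ∀ i : Fin n, ω (i : ℕ) = x i}).toReal

/-- Per-letter distortion extended to blocks of length `L`. -/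
def dBlock (d0 : X → Y → ℝ) (L : ℕ) (x : Fin L → X) (y : Fin L → Y) : ℝ :=
  (1 / (L : ℝ)) * ∑ i, d0 (x i) (y i)

end FFRD

namespace FFRD

/-- `q` is a causal conditioning pmf `q(x̂ⁿ‖x^{n−1}) = ∏ᵢ qᵢ(x̂ᵢ | x̂^{i−1}, x^{i−1})`,
where each factor is a pmf on `Y` depending only on the strict pasts of `x` and `y`. -/
def IsCausalCondKernel {X Y : Type} [Fintype X] [Fintype Y] {n : ℕ}
    (q : (Fin n → X) → (Fin n → Y) → ℝ) : Prop :=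
  ∃ qi : Fin n → (Fin n → X) → (Fin n → Y) → Y → ℝ,
    (∀ i x y, (∀ b, 0 ≤ qi i x y b) ∧ ∑ b, qi i x y b = 1) ∧
    (∀ i x x' y y', (∀ j, j < i → x j = x' j) → (∀ j, j < i → y j = y' j) →
      qi i x y = qi i x' y') ∧
    (∀ x y, q x y = ∏ i, qi i x y (y i))

/-- `I_FF(r, q) = Σ_{xⁿ,x̂ⁿ} p(xⁿ) r(x̂ⁿ|xⁿ) log₂ ( r(x̂ⁿ|xⁿ) / q(x̂ⁿ‖x^{n−1}) )`. -/
def IFF {X Y : Type} [Fintype X] [Fintype Y] {n : ℕ} (p : (Fin n → X) → ℝ)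
    (r q : (Fin n → X) → (Fin n → Y) → ℝ) : ℝ :=
  ∑ x, ∑ y, p x * r x y * Real.logb 2 (r x y / q x y)

end FFRD

/-!
Put `g = q · 2 ^ (-λd)`. The objective is `K(r, q) = I_FF(r, g)`, so an iteration is one round of
alternating minimization.

* For fixed `q`, each row of `r` minimizes a relative entropy to the unnormalized weight `g x`. The
  unique minimizer is the normalization of `g x`, by Gibbs' inequality.
* For fixed `r`, the loss of a causal kernel `q` against the induced one splits over time `i` into
  conditional relative entropies of the next letter given the past, which are nonnegative.

Uniqueness in the first minimization gives the strictness.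
-/

namespace FFRD

section RelEntropy

open InformationTheory

variable {ι : Type*} [Fintype ι] {a b g : ι → ℝ}

/-- Relative entropy, in nats, of nonnegative weights on a finite type; the weights need not be
normalized. A term with `a i = 0` vanishes, but so does one with `b i = 0 < a i`, where the usual
value is `∞`, so absolute continuity has to be assumed separately. -/
def relEntropy (a b : ι → ℝ) : ℝ :=
  ∑ i, a i * Real.log (a i / b i)

lemma mul_klFun_div {s t : ℝ} (hst : t = 0 → s = 0) :
    t * klFun (s / t) = s * Real.log (s / t) + t - s := by
  rcases eq_or_ne t 0 with rfl | ht
  · simp [hst rfl]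
  · rw [klFun_apply]
    field_simp

lemma relEntropy_eq_sum_mul_klFun (hab : ∀ i, b i = 0 → a i = 0) :
    relEntropy a b =
      ∑ i, b i * klFun (a i / b i) + (∑ i, a i - ∑ i, b i) := by
  simp only [relEntropy, ← Finset.sum_sub_distrib, ← Finset.sum_add_distrib]
  refine Finset.sum_congr rfl fun i _ => ?_
  rw [mul_klFun_div (hab i)]
  ring

lemma mul_klFun_div_nonneg {s t : ℝ} (hs : 0 ≤ s) (ht : 0 ≤ t) :
    0 ≤ t * klFun (s / t) :=
  mul_nonneg ht (klFun_nonneg (div_nonneg hs ht))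

lemma relEntropy_nonneg (ha : 0 ≤ a) (hb : 0 ≤ b) (hab : ∀ i, b i = 0 → a i = 0)
    (hsum : ∑ i, b i ≤ ∑ i, a i) : 0 ≤ relEntropy a b := by
  rw [relEntropy_eq_sum_mul_klFun hab]
  exact add_nonneg (Finset.sum_nonneg fun i _ => mul_klFun_div_nonneg (ha i) (hb i))
    (sub_nonneg.2 hsum)

lemma eq_of_relEntropy_eq_zero (ha : 0 ≤ a) (hb : 0 ≤ b) (hab : ∀ i, b i = 0 → a i = 0)
    (hsum : ∑ i, b i ≤ ∑ i, a i) (h : relEntropy a b = 0) : a = b := by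
  have hnonneg : ∀ i ∈ Finset.univ, 0 ≤ b i * klFun (a i / b i) :=
    fun i _ => mul_klFun_div_nonneg (ha i) (hb i)
  have hzero : ∑ i, b i * klFun (a i / b i) = 0 := by
    rw [relEntropy_eq_sum_mul_klFun hab] at h
    linarith [Finset.sum_nonneg hnonneg]
  funext i
  rcases eq_or_ne (b i) 0 with hbi | hbi
  · rw [hab i hbi, hbi]
  · have hkl : klFun (a i / b i) = 0 :=
      (mul_eq_zero.1 ((Finset.sum_eq_zero_iff_of_nonneg hnonneg).1 hzero i
        (Finset.mem_univ i))).resolve_left hbi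
    exact (div_eq_one_iff_eq hbi).1
      ((klFun_eq_zero_iff (div_nonneg (ha i) (hb i))).1 hkl)

lemma relEntropy_self : relEntropy a a = 0 := by
  refine Finset.sum_eq_zero fun i _ => ?_
  rcases eq_or_ne (a i) 0 with hai | hai <;> simp [hai]

lemma relEntropy_div_right {Z : ℝ} (hZ : Z ≠ 0) (hab : ∀ i, b i = 0 → a i = 0) :
    relEntropy a (fun i => b i / Z) = relEntropy a b + (∑ i, a i) * Real.log Z := by
  simp only [relEntropy, Finset.sum_mul, ← Finset.sum_add_distrib]
  refine Finset.sum_congr rfl fun i _ => ?_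
  rcases eq_or_ne (a i) 0 with hai | hai
  · simp [hai]
  · have hbi : b i ≠ 0 := mt (hab i) hai
    rw [div_div_eq_mul_div, mul_div_right_comm, Real.log_mul (div_ne_zero hai hbi) hZ, mul_add]

/-- The probability vector proportional to `g`. It is the zero vector when `∑ i, g i = 0`. -/
def normalized (g : ι → ℝ) (i : ι) : ℝ :=
  g i / ∑ j, g j

lemma normalized_pos (hg : ∀ i, 0 < g i) (i : ι) : 0 < normalized g i :=
  div_pos (hg i) (Finset.sum_pos (fun j _ => hg j) ⟨i, Finset.mem_univ i⟩)

lemma sum_normalized (hg : ∑ i, g i ≠ 0) : ∑ i, normalized g i = 1 := by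
  simp only [normalized, ← Finset.sum_div, div_self hg]

lemma relEntropy_eq_relEntropy_normalized_sub_log (hg : ∑ i, g i ≠ 0)
    (hag : ∀ i, g i = 0 → a i = 0) (ha : ∑ i, a i = 1) :
    relEntropy a g = relEntropy a (normalized g) - Real.log (∑ i, g i) := by
  have h : relEntropy a (normalized g) = _ := relEntropy_div_right hg hag
  rw [h, ha, one_mul, add_sub_cancel_right]

lemma relEntropy_eq_relEntropy_normalized_add (hg : ∑ i, g i ≠ 0)
    (hag : ∀ i, g i = 0 → a i = 0) (ha : ∑ i, a i = 1) :
    relEntropy a g = relEntropy a (normalized g) + relEntropy (normalized g) g := by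
  have hng : ∀ i, g i = 0 → normalized g i = 0 := fun i hgi => by rw [normalized, hgi, zero_div]
  rw [relEntropy_eq_relEntropy_normalized_sub_log hg hag ha,
    relEntropy_eq_relEntropy_normalized_sub_log hg hng (sum_normalized hg), relEntropy_self]
  ring

variable [Nonempty ι]

lemma relEntropy_normalized_le (hg : ∀ i, 0 < g i) (ha : 0 ≤ a) (ha1 : ∑ i, a i = 1) :
    relEntropy (normalized g) g ≤ relEntropy a g := by
  have hsum : ∑ i, g i ≠ 0 := (Finset.sum_pos (fun i _ => hg i) Finset.univ_nonempty).ne'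
  rw [relEntropy_eq_relEntropy_normalized_add hsum (fun i h => absurd h (hg i).ne') ha1]
  exact le_add_of_nonneg_left (relEntropy_nonneg ha (fun i => (normalized_pos hg i).le)
    (fun i h => absurd h (normalized_pos hg i).ne') (by rw [sum_normalized hsum, ha1]))

lemma eq_normalized_of_relEntropy_eq (hg : ∀ i, 0 < g i) (ha : 0 ≤ a) (ha1 : ∑ i, a i = 1)
    (h : relEntropy (normalized g) g = relEntropy a g) : a = normalized g := by
  have hsum : ∑ i, g i ≠ 0 := (Finset.sum_pos (fun i _ => hg i) Finset.univ_nonempty).ne'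
  rw [relEntropy_eq_relEntropy_normalized_add hsum (fun i h => absurd h (hg i).ne') ha1,
    right_eq_add] at h
  exact eq_of_relEntropy_eq_zero ha (fun i => (normalized_pos hg i).le)
    (fun i h => absurd h (normalized_pos hg i).ne') (by rw [sum_normalized hsum, ha1]) h

end RelEntropy

section ConditionalFrequency

variable {α β γ : Type*} [Fintype α] [DecidableEq β] [DecidableEq γ]
  {w : α → ℝ} {ctx : α → γ} {letter : α → β}

/-- The conditional probability, under weights `w`, that `letter` is `l` given that `ctx` is `c`.
It is `0` when the context `c` has total weight `0`. -/
def condFreq (w : α → ℝ) (ctx : α → γ) (letter : α → β) (c : γ) (l : β) : ℝ :=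
  (∑ z with ctx z = c ∧ letter z = l, w z) / ∑ z with ctx z = c, w z

lemma condFreq_nonneg (hw : 0 ≤ w) (c : γ) (l : β) : 0 ≤ condFreq w ctx letter c l :=
  div_nonneg (Finset.sum_nonneg fun z _ => hw z) (Finset.sum_nonneg fun z _ => hw z)

lemma condFreq_pos (hw : 0 ≤ w) {z : α} (hz : 0 < w z) :
    0 < condFreq w ctx letter (ctx z) (letter z) :=
  div_pos (Finset.sum_pos' (fun t _ => hw t) ⟨z, by simp, hz⟩)
    (Finset.sum_pos' (fun t _ => hw t) ⟨z, by simp, hz⟩)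

lemma sum_mul_sum_condFreq_mul [Fintype β] (c : γ) (hc : ∑ z with ctx z = c, w z ≠ 0) (f : β → ℝ) :
    (∑ z with ctx z = c, w z) * ∑ l, condFreq w ctx letter c l * f l =
      ∑ z with ctx z = c, w z * f (letter z) := by
  rw [Finset.mul_sum]
  refine (Finset.sum_congr rfl fun l _ => ?_).trans (Finset.sum_fiberwise _ letter _)
  rw [condFreq, ← mul_assoc, mul_div_cancel₀ _ hc, Finset.sum_mul, Finset.filter_filter]
  refine Finset.sum_congr rfl fun z hz => ?_
  rw [(Finset.mem_filter.1 hz).2.2]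

lemma sum_condFreq [Fintype β] (c : γ) (hc : ∑ z with ctx z = c, w z ≠ 0) :
    ∑ l, condFreq w ctx letter c l = 1 := by
  simpa [hc] using sum_mul_sum_condFreq_mul (letter := letter) c hc fun _ => 1

lemma sum_fiber_mul_log_condFreq_div_nonneg [Fintype β] (hw : 0 ≤ w) {κ : β → ℝ} (hκ : 0 ≤ κ)
    (hκ1 : ∑ l, κ l ≤ 1) (c : γ) (hwκ : ∀ z, ctx z = c → κ (letter z) = 0 → w z = 0) :
    0 ≤ ∑ z with ctx z = c,
      w z * Real.log (condFreq w ctx letter c (letter z) / κ (letter z)) := by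
  rcases eq_or_ne (∑ z with ctx z = c, w z) 0 with hc | hc
  · have hzero := (Finset.sum_eq_zero_iff_of_nonneg fun z _ => hw z).1 hc
    exact (Finset.sum_eq_zero fun z hz => by rw [hzero z hz, zero_mul]).ge
  have hac : ∀ l, κ l = 0 → condFreq w ctx letter c l = 0 := fun l hl => by
    rw [condFreq, Finset.sum_eq_zero, zero_div]
    rintro z hz
    obtain ⟨-, hzc, rfl⟩ := Finset.mem_filter.1 hz
    exact hwκ z hzc hl
  rw [← sum_mul_sum_condFreq_mul c hc fun l => Real.log (condFreq w ctx letter c l / κ l)]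
  exact mul_nonneg (Finset.sum_nonneg fun z _ => hw z)
    (relEntropy_nonneg (condFreq_nonneg hw c) hκ hac (by rwa [sum_condFreq c hc]))

lemma sum_mul_log_condFreq_div_nonneg [Fintype β] (hw : 0 ≤ w) {κ : α → β → ℝ}
    (hκctx : κ.FactorsThrough ctx) (hκ : ∀ z, 0 ≤ κ z) (hκ1 : ∀ z, ∑ l, κ z l ≤ 1)
    (hwκ : ∀ z, κ z (letter z) = 0 → w z = 0) :
    0 ≤ ∑ z, w z * Real.log (condFreq w ctx letter (ctx z) (letter z) / κ z (letter z)) := by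
  have hmaps : ∀ z ∈ (Finset.univ : Finset α), ctx z ∈ Finset.univ.image ctx :=
    fun z hz => Finset.mem_image_of_mem ctx hz
  rw [← Finset.sum_fiberwise_of_maps_to hmaps]
  refine Finset.sum_nonneg fun c hc => ?_
  obtain ⟨z₀, -, rfl⟩ := Finset.mem_image.1 hc
  have hκz : ∀ z, ctx z = ctx z₀ → κ z = κ z₀ := fun z hz => hκctx hz
  refine (sum_fiber_mul_log_condFreq_div_nonneg (letter := letter) hw (hκ z₀) (hκ1 z₀) (ctx z₀)
    fun z hz h => hwκ z (by rwa [hκz z hz])).trans_eq (Finset.sum_congr rfl fun z hz => ?_)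
  have hzc : ctx z = ctx z₀ := (Finset.mem_filter.1 hz).2
  rw [hzc, hκz z hzc]

end ConditionalFrequency

section CausalConditioning

variable {X Y : Type} {n : ℕ}

/-- The strict past `(x^{i-1}, x̂^{i-1})` of time `i`, the context of the `i`-th causal factor. -/
def past (i : Fin n) (z : (Fin n → X) × (Fin n → Y)) : (Set.Iio i → X) × (Set.Iio i → Y) :=
  (fun j => z.1 j, fun j => z.2 j)

lemma past_eq_past_iff {i : Fin n} {z z' : (Fin n → X) × (Fin n → Y)} :
    past i z = past i z' ↔ (∀ j < i, z.1 j = z'.1 j) ∧ ∀ j < i, z.2 j = z'.2 j := by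
  simp [past, funext_iff]

lemma past_eq_and_snd_eq_iff {i : Fin n} {z z' : (Fin n → X) × (Fin n → Y)} :
    past i z = past i z' ∧ z.2 i = z'.2 i ↔
      (∀ j < i, z.1 j = z'.1 j) ∧ ∀ j ≤ i, z.2 j = z'.2 j := by
  simp only [past_eq_past_iff, le_iff_lt_or_eq, or_imp, forall_and, forall_eq, and_assoc]

/-- The joint weight `p(xⁿ) r(x̂ⁿ|xⁿ)` on pairs of sequences. -/
def joint (p : (Fin n → X) → ℝ) (r : (Fin n → X) → (Fin n → Y) → ℝ)
    (z : (Fin n → X) × (Fin n → Y)) : ℝ :=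
  p z.1 * r z.1 z.2

variable [Fintype X] [Fintype Y]
  {p : (Fin n → X) → ℝ} {r q : (Fin n → X) → (Fin n → Y) → ℝ}

lemma sum_joint_mul (f : (Fin n → X) × (Fin n → Y) → ℝ) :
    ∑ z, joint p r z * f z = ∑ x, ∑ y, p x * r x y * f (x, y) :=
  Fintype.sum_prod_type _

lemma IFF_eq_sum_mul_relEntropy_div :
    IFF p r q = (∑ x, p x * relEntropy (r x) (q x)) / Real.log 2 := by
  simp only [IFF, relEntropy, Real.logb, Finset.mul_sum, Finset.sum_div]
  refine Finset.sum_congr rfl fun x _ => Finset.sum_congr rfl fun y _ => ?_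
  ring

variable [DecidableEq X] [DecidableEq Y]

/-- The `i`-th factor `P(x̂_i = b | x̂^{i-1}, x^{i-1})` of the induced causal conditioning pmf. -/
def causalFactor (p : (Fin n → X) → ℝ) (r : (Fin n → X) → (Fin n → Y) → ℝ) (i : Fin n)
    (z : (Fin n → X) × (Fin n → Y)) (b : Y) : ℝ :=
  condFreq (joint p r) (past i) (fun z' => z'.2 i) (past i z) b

lemma causalCond_eq_prod_causalFactor (x : Fin n → X) (y : Fin n → Y) :
    causalCond p r x y = ∏ i, causalFactor p r i (x, y) (y i) := by
  refine Finset.prod_congr rfl fun i _ => ?_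
  rw [causalFactor, condFreq, Finset.sum_filter, Finset.sum_filter, Fintype.sum_prod_type,
    Fintype.sum_prod_type]
  refine congrArg₂ (· / ·) ?_ ?_ <;>
    refine Fintype.sum_congr _ _ fun x' => Fintype.sum_congr _ _ fun y' => if_congr ?_ rfl rfl
  · exact (past_eq_and_snd_eq_iff (z := (x', y')) (z' := (x, y))).symm
  · exact (past_eq_past_iff (z := (x', y')) (z' := (x, y))).symm

lemma causalFactor_factorsThrough (i : Fin n) :
    (causalFactor p r i).FactorsThrough (past i) := fun z z' h => by
  funext b
  rw [causalFactor, h, causalFactor]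

lemma causalFactor_pos (hpr : 0 ≤ joint p r) {z : (Fin n → X) × (Fin n → Y)}
    (hz : 0 < joint p r z) (i : Fin n) : 0 < causalFactor p r i z (z.2 i) :=
  condFreq_pos (letter := fun z' : (Fin n → X) × (Fin n → Y) => z'.2 i) hpr hz

lemma causalCond_pos (hpr : 0 ≤ joint p r) {x : Fin n → X} {y : Fin n → Y}
    (hxy : 0 < p x * r x y) : 0 < causalCond p r x y := by
  rw [causalCond_eq_prod_causalFactor]
  exact Finset.prod_pos fun i _ => causalFactor_pos hpr (z := (x, y)) hxy i

lemma isCausalCondKernel_causalCond (hpr : ∀ z, 0 < joint p r z) :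
    IsCausalCondKernel (causalCond p r) := by
  have hpr' : 0 ≤ joint p r := fun z => (hpr z).le
  refine ⟨fun i x y => causalFactor p r i (x, y), fun i x y => ⟨condFreq_nonneg hpr' _, ?_⟩,
    fun i x x' y y' hx hy => causalFactor_factorsThrough i (past_eq_past_iff.2 ⟨hx, hy⟩),
    causalCond_eq_prod_causalFactor⟩
  exact sum_condFreq _ (Finset.sum_pos (fun z _ => hpr z) ⟨(x, y), by simp⟩).ne'

lemma sum_joint_mul_log_causalCond_div_nonneg (hpr : 0 ≤ joint p r) (hq : IsCausalCondKernel q)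
    (hqpos : ∀ x y, 0 < q x y) :
    0 ≤ ∑ z, joint p r z * Real.log (causalCond p r z.1 z.2 / q z.1 z.2) := by
  obtain ⟨κ, hκ, hκpast, hqκ⟩ := hq
  have hκne : ∀ i x y, κ i x y (y i) ≠ 0 := fun i x y h =>
    (hqpos x y).ne' (by rw [hqκ, Finset.prod_eq_zero (Finset.mem_univ i) h])
  have hlog : ∀ z, joint p r z * Real.log (causalCond p r z.1 z.2 / q z.1 z.2) =
      ∑ i, joint p r z * Real.log (causalFactor p r i z (z.2 i) / κ i z.1 z.2 (z.2 i)) := by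
    intro z
    rcases (hpr z).eq_or_lt with hz | hz
    · simp [← hz]
    · rw [causalCond_eq_prod_causalFactor, hqκ, ← Finset.prod_div_distrib, Real.log_prod
        fun i _ => div_ne_zero (causalFactor_pos hpr hz i).ne' (hκne i _ _), Finset.mul_sum]
  rw [Finset.sum_congr rfl fun z _ => hlog z, Finset.sum_comm]
  exact Finset.sum_nonneg fun i _ => sum_mul_log_condFreq_div_nonneg hpr
    (κ := fun z => κ i z.1 z.2) (ctx := past i) (letter := fun z => z.2 i)
    (fun z z' h => hκpast i _ _ _ _ (past_eq_past_iff.1 h).1 (past_eq_past_iff.1 h).2)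
    (fun z => (hκ i z.1 z.2).1) (fun z => (hκ i z.1 z.2).2.le)
    fun z h => absurd h (hκne i _ _)

lemma IFF_causalCond_le (hpr : 0 ≤ joint p r) (hq : IsCausalCondKernel q)
    (hqpos : ∀ x y, 0 < q x y) : IFF p r (causalCond p r) ≤ IFF p r q := by
  have hdiff : IFF p r q - IFF p r (causalCond p r) =
      (∑ z, joint p r z * Real.log (causalCond p r z.1 z.2 / q z.1 z.2)) / Real.log 2 := by
    rw [sum_joint_mul]
    simp only [IFF, ← Finset.sum_sub_distrib, Finset.sum_div]
    refine Finset.sum_congr rfl fun x _ => Finset.sum_congr rfl fun y _ => ?_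
    rcases (hpr (x, y)).eq_or_lt with hxy | hxy
    · have hxy' : p x * r x y = 0 := hxy.symm
      simp [hxy']
    · have hr : r x y ≠ 0 := right_ne_zero_of_mul hxy.ne'
      have hcc : causalCond p r x y ≠ 0 := (causalCond_pos hpr hxy).ne'
      rw [Real.logb, Real.logb, Real.log_div hr (hqpos x y).ne', Real.log_div hr hcc,
        Real.log_div hcc (hqpos x y).ne']
      ring
  refine sub_nonneg.1 (hdiff ▸ div_nonneg ?_ (Real.log_nonneg one_le_two))
  exact sum_joint_mul_log_causalCond_div_nonneg hpr hq hqpos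

end CausalConditioning

section AlternatingMinimization

variable {X Y : Type} {n : ℕ} {p : (Fin n → X) → ℝ} {lam : ℝ}
  {d r q g : (Fin n → X) → (Fin n → Y) → ℝ}

/-- The unnormalized weight `q · 2 ^ (-λd)` whose normalization is the next iterate of `r`. -/
def tilted (lam : ℝ) (d q : (Fin n → X) → (Fin n → Y) → ℝ) (x : Fin n → X) (y : Fin n → Y) : ℝ :=
  q x y * 2 ^ (-(lam * d x y))

lemma tilted_pos (hq : ∀ x y, 0 < q x y) (x : Fin n → X) (y : Fin n → Y) :
    0 < tilted lam d q x y :=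
  mul_pos (hq x y) (Real.rpow_pos_of_pos two_pos _)

variable [Fintype Y]

lemma isCondPMF_normalized [Nonempty (Fin n → Y)] (hg : ∀ x y, 0 < g x y) :
    IsCondPMF fun x => normalized (g x) :=
  ⟨fun x y => (normalized_pos (hg x) y).le, fun x =>
    sum_normalized (Finset.sum_pos (fun y _ => hg x y) Finset.univ_nonempty).ne'⟩

lemma joint_normalized_tilted_pos (hp : ∀ x, 0 < p x) (hq : ∀ x y, 0 < q x y)
    (z : (Fin n → X) × (Fin n → Y)) :
    0 < joint p (fun x => normalized (tilted lam d q x)) z :=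
  mul_pos (hp z.1) (normalized_pos (tilted_pos hq z.1) z.2)

variable [Fintype X]

lemma IFF_normalized_le [Nonempty (Fin n → Y)] (hp : 0 ≤ p) (hg : ∀ x y, 0 < g x y)
    (hr : IsCondPMF r) : IFF p (fun x => normalized (g x)) g ≤ IFF p r g := by
  rw [IFF_eq_sum_mul_relEntropy_div, IFF_eq_sum_mul_relEntropy_div]
  refine div_le_div_of_nonneg_right (Finset.sum_le_sum fun x _ => ?_) (Real.log_nonneg one_le_two)
  exact mul_le_mul_of_nonneg_left (relEntropy_normalized_le (hg x) (hr.1 x) (hr.2 x)) (hp x)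

lemma eq_normalized_of_IFF_eq [Nonempty (Fin n → Y)] (hp : ∀ x, 0 < p x)
    (hg : ∀ x y, 0 < g x y) (hr : IsCondPMF r)
    (h : IFF p (fun x => normalized (g x)) g = IFF p r g) : r = fun x => normalized (g x) := by
  rw [IFF_eq_sum_mul_relEntropy_div, IFF_eq_sum_mul_relEntropy_div,
    div_left_inj' (Real.log_pos one_lt_two).ne', Finset.sum_eq_sum_iff_of_le fun x _ =>
      mul_le_mul_of_nonneg_left (relEntropy_normalized_le (hg x) (hr.1 x) (hr.2 x)) (hp x).le] at h
  funext x
  exact eq_normalized_of_relEntropy_eq (hg x) (hr.1 x) (hr.2 x)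
    (mul_left_cancel₀ (hp x).ne' (h x (Finset.mem_univ x)))

/-- The objective `K(r, q) = I_FF(r, q) + λ E[d]` of the Blahut–Arimoto-type iteration. -/
def lagrangian (p : (Fin n → X) → ℝ) (lam : ℝ) (d r q : (Fin n → X) → (Fin n → Y) → ℝ) : ℝ :=
  IFF p r q + lam * ∑ x, ∑ y, p x * r x y * d x y

lemma lagrangian_eq_IFF_tilted (hq : ∀ x y, q x y ≠ 0) :
    lagrangian p lam d r q = IFF p r (tilted lam d q) := by
  simp only [lagrangian, IFF, Finset.mul_sum, ← Finset.sum_add_distrib]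
  refine Finset.sum_congr rfl fun x _ => Finset.sum_congr rfl fun y _ => ?_
  rcases eq_or_ne (r x y) 0 with hr | hr
  · simp [hr]
  · have hpow : (2 : ℝ) ^ (-(lam * d x y)) ≠ 0 := (Real.rpow_pos_of_pos two_pos _).ne'
    rw [tilted, ← div_div, Real.logb_div (div_ne_zero hr (hq x y)) hpow,
      Real.logb_rpow two_pos (by norm_num)]
    ring

lemma lagrangian_causalCond_le [DecidableEq X] [DecidableEq Y] (hpr : 0 ≤ joint p r)
    (hq : IsCausalCondKernel q) (hqpos : ∀ x y, 0 < q x y) :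
    lagrangian p lam d r (causalCond p r) ≤ lagrangian p lam d r q :=
  add_le_add_left (IFF_causalCond_le hpr hq hqpos) _

lemma lagrangian_normalized_tilted_le [Nonempty (Fin n → Y)] (hp : 0 ≤ p)
    (hq : ∀ x y, 0 < q x y) (hr : IsCondPMF r) :
    lagrangian p lam d (fun x => normalized (tilted lam d q x)) q ≤ lagrangian p lam d r q := by
  simp only [lagrangian_eq_IFF_tilted fun x y => (hq x y).ne']
  exact IFF_normalized_le hp (tilted_pos hq) hr

lemma eq_normalized_tilted_of_lagrangian_eq [Nonempty (Fin n → Y)] (hp : ∀ x, 0 < p x)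
    (hq : ∀ x y, 0 < q x y) (hr : IsCondPMF r)
    (h : lagrangian p lam d (fun x => normalized (tilted lam d q x)) q = lagrangian p lam d r q) :
    r = fun x => normalized (tilted lam d q x) := by
  simp only [lagrangian_eq_IFF_tilted fun x y => (hq x y).ne'] at h
  exact eq_normalized_of_IFF_eq hp (tilted_pos hq) hr h

end AlternatingMinimization

end FFRD

open FFRD in
theorem BA_iteration_monotone_general
    {X Y : Type} [Fintype X] [DecidableEq X] [Fintype Y] [DecidableEq Y] {n : ℕ}
    {p : (Fin n → X) → ℝ} (hp : ∀ x, 0 < p x) {lam : ℝ} {d : (Fin n → X) → (Fin n → Y) → ℝ}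
    {r q : ℕ → (Fin n → X) → (Fin n → Y) → ℝ} (hq0 : ∀ x y, 0 < q 0 x y)
    (hr : ∀ k, r (k + 1) = fun x => normalized (tilted lam d (q k) x))
    (hq : ∀ k, q (k + 1) = causalCond p (r (k + 1))) (k : ℕ) :
    lagrangian p lam d (r (k + 2)) (q (k + 2)) ≤ lagrangian p lam d (r (k + 1)) (q (k + 1)) ∧
      (lagrangian p lam d (r (k + 2)) (q (k + 2)) = lagrangian p lam d (r (k + 1)) (q (k + 1)) →
        r (k + 2) = r (k + 1) ∧ q (k + 2) = q (k + 1)) := by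
  rcases isEmpty_or_nonempty (Fin n → Y) with hY | hY
  · rw [Subsingleton.elim (r (k + 2)) (r (k + 1)), Subsingleton.elim (q (k + 2)) (q (k + 1))]
    exact ⟨le_rfl, fun _ => ⟨rfl, rfl⟩⟩
  have hjoint (m : ℕ) (hm : ∀ x y, 0 < q m x y) z : 0 < joint p (r (m + 1)) z :=
    hr m ▸ joint_normalized_tilted_pos hp hm z
  have hqpos (m : ℕ) : ∀ x y, 0 < q m x y := by
    induction m with
    | zero => exact hq0
    | succ m ih =>
      intro x y
      rw [hq]
      exact causalCond_pos (fun z => (hjoint m ih z).le) (hjoint m ih (x, y))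
  have hrPMF : IsCondPMF (r (k + 1)) := hr k ▸ isCondPMF_normalized (tilted_pos (hqpos k))
  have hqcausal : IsCausalCondKernel (q (k + 1)) :=
    hq k ▸ isCausalCondKernel_causalCond (hjoint k (hqpos k))
  have hqstep : lagrangian p lam d (r (k + 2)) (q (k + 2)) ≤
      lagrangian p lam d (r (k + 2)) (q (k + 1)) :=
    hq (k + 1) ▸ lagrangian_causalCond_le (fun z => (hjoint (k + 1) (hqpos _) z).le)
      hqcausal (hqpos (k + 1))
  have hrstep : lagrangian p lam d (r (k + 2)) (q (k + 1)) ≤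
      lagrangian p lam d (r (k + 1)) (q (k + 1)) :=
    hr (k + 1) ▸ lagrangian_normalized_tilted_le (fun x => (hp x).le) (hqpos (k + 1)) hrPMF
  refine ⟨hqstep.trans hrstep, fun heq => ?_⟩
  have hreq : r (k + 2) = r (k + 1) :=
    (hr (k + 1)).trans (eq_normalized_tilted_of_lagrangian_eq hp (hqpos (k + 1)) hrPMF
      (hr (k + 1) ▸ hrstep.antisymm (heq ▸ hqstep))).symm
  exact ⟨hreq, by rw [hq (k + 1), hq k, hreq]⟩

open FFRD in
/-- Lemma 11: along the Blahut–Arimoto-type iteration, the value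
`K(r^k,q^k) = I_FF(r^k,q^k) + λ·E_{r^k}[d]` is non-increasing, and strictly decreasing
unless the iterates have stabilized. -/
theorem BA_iteration_monotone
    {X Y : Type} [Fintype X] [DecidableEq X] [Fintype Y] [DecidableEq Y]
    (n : ℕ)
    (p : (Fin n → X) → ℝ) (hp : IsPMF p) (hppos : ∀ x, 0 < p x)
    (lam : ℝ) (hlam : 0 ≤ lam)
    (d : (Fin n → X) → (Fin n → Y) → ℝ) (hd : ∀ x y, 0 ≤ d x y)
    (r : ℕ → (Fin n → X) → (Fin n → Y) → ℝ)
    (q : ℕ → (Fin n → X) → (Fin n → Y) → ℝ)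
    (hq0 : IsCausalCondKernel (q 0)) (hq0pos : ∀ x y, 0 < q 0 x y)
    (hr : ∀ k, 1 ≤ k → ∀ x y, r k x y =
      q (k - 1) x y * 2 ^ (-(lam * d x y)) /
        ∑ y', q (k - 1) x y' * 2 ^ (-(lam * d x y')))
    (hqk : ∀ k, 1 ≤ k → q k = causalCond p (r k)) :
    ∀ k, 1 ≤ k →
      (IFF p (r (k + 1)) (q (k + 1)) +
          lam * (∑ x, ∑ y, p x * r (k + 1) x y * d x y) ≤
        IFF p (r k) (q k) + lam * (∑ x, ∑ y, p x * r k x y * d x y)) ∧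
      ((IFF p (r (k + 1)) (q (k + 1)) +
          lam * (∑ x, ∑ y, p x * r (k + 1) x y * d x y) =
        IFF p (r k) (q k) + lam * (∑ x, ∑ y, p x * r k x y * d x y)) →
        r (k + 1) = r k ∧ q (k + 1) = q k) := by
  intro k hk
  obtain ⟨k, rfl⟩ := Nat.exists_eq_add_of_le' hk
  exact BA_iteration_monotone_general hppos hq0pos
    (fun m => funext₂ (hr (m + 1) m.succ_pos)) (fun m => hqk (m + 1) m.succ_pos) k
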